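/- arXiv:1903.03880 — 3 statements merged into one kernel-verified Lean document; each statement's English description precedes it below -/
import Mathlib

section
/- Let n be a nonempty finite type and let ρ ∈ Matrix n n ℂ be Hermitian with Tr ρ = 1. Then (‖ρ‖₁ - 1)/2 is the least element of the set {s : ℝ | s ≥ 0 ∧ ∃ δ τ ∈ Matrix n n ℂ, δ and τ are density matrices and ρ = (1+s) • δ - s • τ}. In other words, the robustness of non-Markovianity of ρ (the minimal amount s of Markovian noise τ whose admixture (ρ + s·τ)/(1+s) is Markovian) admits the closed-form expression (‖ρ‖₁ - 1)/2, and the minimum is attained. -/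
open Matrix
open scoped ComplexOrder

open scoped MatrixOrder in
/-- The trace norm of a matrix: the trace of the positive semidefinite square root of `AᴴA`. -/
noncomputable def traceNorm {n : Type*} [Fintype n] [DecidableEq n] (A : Matrix n n ℂ) : ℝ :=
  ((CFC.sqrt (Aᴴ * A)).trace).re

/-- A density matrix: positive semidefinite with unit trace. -/
def IsDensityMatrix {n : Type*} [Fintype n] (ρ : Matrix n n ℂ) : Prop :=
  ρ.PosSemidef ∧ ρ.trace = 1

open scoped MatrixOrder in
/-- The trace of a product of two positive semidefinite matrices is nonnegative. -/
theorem Matrix.PosSemidef.re_trace_mul_nonneg {n : Type*} [Fintype n] [DecidableEq n]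
    {A B : Matrix n n ℂ} (hA : A.PosSemidef) (hB : B.PosSemidef) : 0 ≤ (A * B).trace.re := by
  obtain ⟨C, rfl⟩ := CStarAlgebra.nonneg_iff_eq_star_mul_self.mp hB.nonneg
  have h : (A * (star C * C)).trace = (C * A * Cᴴ).trace := by
    rw [← mul_assoc, Matrix.trace_mul_comm, ← mul_assoc, Matrix.star_eq_conjTranspose]
  rw [h]
  exact (Complex.nonneg_iff.mp (hA.mul_mul_conjTranspose_same C).trace_nonneg).1

open scoped MatrixOrder in
/-- The trace norm of a Hermitian matrix is the total trace of its positive and negative parts. -/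
theorem Matrix.IsHermitian.traceNorm_eq {n : Type*} [Fintype n] [DecidableEq n]
    {A : Matrix n n ℂ} (hA : A.IsHermitian) :
    traceNorm A = (A⁺).trace.re + (A⁻).trace.re := by
  have h : CFC.abs A = A⁺ + A⁻ := (CFC.posPart_add_negPart A hA.isSelfAdjoint).symm
  have h' : traceNorm A = (CFC.abs A).trace.re := rfl
  rw [h', h, Matrix.trace_add, Complex.add_re]

open scoped MatrixOrder in
/-- The trace norm of a difference of positive semidefinite matrices is at most the sum of
their traces. -/
theorem traceNorm_sub_le {n : Type*} [Fintype n] [DecidableEq n]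
    {A B : Matrix n n ℂ} (hA : A.PosSemidef) (hB : B.PosSemidef) :
    traceNorm (A - B) ≤ A.trace.re + B.trace.re := by
  set R := A - B with hR
  have hRs : IsSelfAdjoint R := (hA.1.sub hB.1).isSelfAdjoint
  let sgn : ℝ → ℝ := fun x => SignType.sign x
  have hcont (f : ℝ → ℝ) : ContinuousOn f (spectrum ℝ R) :=
    (Matrix.finite_real_spectrum (A := R)).continuousOn f
  set S := cfc sgn R with hS
  have habs : traceNorm R = (S * R).trace.re := by
    have h : CFC.abs R = S * R := by
      rw [CFC.abs_eq_cfc_norm R hRs]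
      conv_rhs => rw [← cfc_id' ℝ R hRs]
      rw [hS, ← cfc_mul _ _ R (hcont _) (hcont _)]
      exact cfc_congr fun x _ => (sign_mul_self x).symm
    rw [← h]; rfl
  have hle : S ≤ 1 := cfc_le_one _ _ fun x _ => by
    rcases lt_trichotomy x 0 with h | h | h <;> simp [sgn, h]
  have hge : -1 ≤ S := by
    have := algebraMap_le_cfc sgn (-1) R (fun x _ => by
      rcases lt_trichotomy x 0 with h | h | h <;> simp [sgn, h]) (hcont _) hRs
    simpa using this
  have h₁ := (Matrix.le_iff.mp hle).re_trace_mul_nonneg hA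
  have h₂ := (Matrix.le_iff.mp hge).re_trace_mul_nonneg hB
  rw [habs, hR]
  simp only [sub_mul, mul_sub, one_mul, neg_mul, Matrix.trace_sub, Matrix.trace_neg,
    Complex.sub_re, Complex.neg_re] at h₁ h₂ ⊢
  linarith

open scoped MatrixOrder in
/-- The robustness of non-Markovianity of a Hermitian trace-one Choi matrix `ρ` — the least
`s ≥ 0` admitting a pseudo-mixture decomposition `ρ = (1+s)δ - sτ` with `δ, τ` density
matrices — equals `(‖ρ‖₁ - 1)/2`, and the minimum is attained. -/
theorem robustness_closed_form {n : Type*} [Fintype n] [DecidableEq n] [Nonempty n]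
    (ρ : Matrix n n ℂ) (hρ : ρ.IsHermitian) (htr : ρ.trace = 1) :
    IsLeast {s : ℝ | 0 ≤ s ∧ ∃ δ τ : Matrix n n ℂ, IsDensityMatrix δ ∧ IsDensityMatrix τ ∧
        ρ = (1 + s) • δ - s • τ}
      ((traceNorm ρ - 1) / 2) := by
  constructor
  · have hpos : (ρ⁺).PosSemidef := Matrix.nonneg_iff_posSemidef.mp (CFC.posPart_nonneg ρ)
    have hneg : (ρ⁻).PosSemidef := Matrix.nonneg_iff_posSemidef.mp (CFC.negPart_nonneg ρ)
    have hsub : ρ⁺ - ρ⁻ = ρ := CFC.posPart_sub_negPart ρ hρ.isSelfAdjoint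
    obtain ⟨s, hs⟩ : ∃ s : ℝ, s = (ρ⁻).trace.re := ⟨_, rfl⟩
    have hs0 : 0 ≤ s := hs ▸ (Complex.nonneg_iff.mp hneg.trace_nonneg).1
    have htneg : (ρ⁻).trace = s := by
      rw [hs]; exact Complex.eq_re_of_ofReal_le (r := 0) (by simpa using hneg.trace_nonneg)
    have htpos : (ρ⁺).trace = 1 + s := by
      rw [← hsub, Matrix.trace_sub, htneg] at htr
      exact sub_eq_iff_eq_add.mp htr
    have hnorm : (traceNorm ρ - 1) / 2 = s := by
      rw [hρ.traceNorm_eq, htneg, htpos]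
      simp only [Complex.add_re, Complex.one_re, Complex.ofReal_re]
      ring
    rw [hnorm]
    have hs1 : 1 + s ≠ 0 := by positivity
    have hδ : IsDensityMatrix ((1 + s)⁻¹ • ρ⁺) := by
      refine ⟨hpos.smul (by positivity), ?_⟩
      rw [Matrix.trace_smul, htpos, Complex.real_smul]
      exact_mod_cast inv_mul_cancel₀ hs1
    refine ⟨hs0, (1 + s)⁻¹ • ρ⁺, ?_⟩
    rcases eq_or_ne s 0 with h0 | h0
    · refine ⟨_, hδ, hδ, ?_⟩
      have hz : ρ⁻ = 0 := hneg.trace_eq_zero_iff.mp (by simp [htneg, h0])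
      rw [smul_inv_smul₀ hs1, h0, zero_smul, ← hz, hsub]
    · refine ⟨s⁻¹ • ρ⁻, hδ, ⟨hneg.smul (by positivity), ?_⟩, ?_⟩
      · rw [Matrix.trace_smul, htneg, Complex.real_smul]
        exact_mod_cast inv_mul_cancel₀ h0
      · rw [smul_inv_smul₀ hs1, smul_inv_smul₀ h0, hsub]
  · rintro s ⟨hs, δ, τ, hδ, hτ, rfl⟩
    have h := traceNorm_sub_le (hδ.1.smul (by positivity : 0 ≤ 1 + s)) (hτ.1.smul hs)
    simp only [Matrix.trace_smul, hδ.2, hτ.2, Complex.smul_re, Complex.one_re, smul_eq_mul,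
      mul_one] at h
    linarith
end

section
/- Let n be a nonempty finite type and let ρ ∈ Matrix n n ℂ be Hermitian with Tr ρ = 1. Then (‖ρ‖₁ - 1)/2 is the least element of the set {s : ℝ | s ≥ 0 ∧ ∃ δ ∈ Matrix n n ℂ, δ is a density matrix and (1+s) • δ - ρ is positive semidefinite}. That is, the semidefinite-programming form min{ s ≥ 0 : ρ ≤ (1+s)δ, δ a density matrix } of the robustness of non-Markovianity equals (‖ρ‖₁ - 1)/2, and the minimum is attained. -/
open Matrix
open scoped ComplexOrder

namespace Matrix.IsHermitian

variable {n : Type*} [Fintype n] [DecidableEq n] {A : Matrix n n ℂ}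

theorem trace_cfc (hA : A.IsHermitian) (f : ℝ → ℝ) :
    (cfc f A).trace = ((∑ i, f (hA.eigenvalues i) : ℝ) : ℂ) := by
  rw [hA.cfc_eq, Matrix.IsHermitian.cfc, Unitary.conjStarAlgAut_apply, trace_mul_cycle]
  simp [trace_diagonal]

open scoped MatrixOrder in
theorem traceNorm_eq_sum_abs_eigenvalues (hA : A.IsHermitian) :
    traceNorm A = ∑ i, |hA.eigenvalues i| := by
  change (CFC.abs A).trace.re = _
  rw [CFC.abs_eq_cfc_norm A hA, hA.trace_cfc, Complex.ofReal_re]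
  simp only [Real.norm_eq_abs]

theorem sum_max_eigenvalues (hA : A.IsHermitian) :
    ∑ i, max (hA.eigenvalues i) 0 = (traceNorm A + A.trace.re) / 2 := by
  rw [hA.traceNorm_eq_sum_abs_eigenvalues, hA.trace_eq_sum_eigenvalues, Complex.re_sum,
    ← Finset.sum_add_distrib, Finset.sum_div]
  refine Finset.sum_congr rfl fun i _ => ?_
  rcases le_total (hA.eigenvalues i) 0 with h | h <;> simp [h, abs_of_nonneg, abs_of_nonpos]

/-- Any positive semidefinite upper bound of a Hermitian matrix has trace at least the sum of the
positive eigenvalues. -/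
theorem sum_max_eigenvalues_le_trace (hA : A.IsHermitian) {B : Matrix n n ℂ}
    (hB : B.PosSemidef) (hAB : (B - A).PosSemidef) :
    ∑ i, max (hA.eigenvalues i) 0 ≤ B.trace.re := by
  set U : Matrix n n ℂ := hA.eigenvectorUnitary.1
  have hU : U * Uᴴ = 1 := Unitary.coe_mul_star_self hA.eigenvectorUnitary
  have hd : Uᴴ * A * U = diagonal (RCLike.ofReal ∘ hA.eigenvalues) := by
    rw [← hA.conjStarAlgAut_star_eigenvectorUnitary, Unitary.conjStarAlgAut_star_apply]
    simp [U, star_eq_conjTranspose]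
  have ht : B.trace = (Uᴴ * B * U).trace := by
    rw [trace_mul_comm, ← mul_assoc, hU, one_mul]
  rw [ht, trace, Complex.re_sum]
  refine Finset.sum_le_sum fun i _ => max_le ?_ ?_
  · have h := (hAB.conjTranspose_mul_mul_same U).diag_nonneg (i := i)
    rw [mul_sub, sub_mul, hd] at h
    simpa using (Complex.le_def.1 h).1
  · exact (Complex.le_def.1 ((hB.conjTranspose_mul_mul_same U).diag_nonneg (i := i))).1

open scoped MatrixOrder in
/-- The positive part of a Hermitian matrix is a positive semidefinite upper bound whose trace is
the sum of the positive eigenvalues. -/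
theorem exists_posSemidef_trace_eq_sum_max_eigenvalues (hA : A.IsHermitian) :
    ∃ B : Matrix n n ℂ, B.PosSemidef ∧ (B - A).PosSemidef ∧
      B.trace = ((∑ i, max (hA.eigenvalues i) 0 : ℝ) : ℂ) := by
  have hA' : IsSelfAdjoint A := hA
  refine ⟨cfc (fun x : ℝ => max x 0) A, ?_, ?_, hA.trace_cfc _⟩
  · exact nonneg_iff_posSemidef.1 (cfc_nonneg fun x _ => le_max_right (x : ℝ) 0)
  · rw [← le_iff]
    conv_lhs => rw [← cfc_id ℝ A]
    exact cfc_mono fun x _ => le_max_left x 0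

end Matrix.IsHermitian

/-- The semidefinite-programming form `min { s ≥ 0 | ρ ≤ (1+s)δ, δ a density matrix }` of the
robustness of non-Markovianity equals `(‖ρ‖₁ - 1)/2`, and the minimum is attained. -/
theorem robustness_sdp_form {n : Type*} [Fintype n] [DecidableEq n] [Nonempty n]
    (ρ : Matrix n n ℂ) (hρ : ρ.IsHermitian) (htr : ρ.trace = 1) :
    IsLeast {s : ℝ | 0 ≤ s ∧ ∃ δ : Matrix n n ℂ, IsDensityMatrix δ ∧
        ((1 + s) • δ - ρ).PosSemidef}
      ((traceNorm ρ - 1) / 2) := by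
  have hsum := hρ.sum_max_eigenvalues
  rw [htr, Complex.one_re] at hsum
  constructor
  · obtain ⟨B, hB, hBρ, htrB⟩ := hρ.exists_posSemidef_trace_eq_sum_max_eigenvalues
    rw [hsum] at htrB
    have h1 : 1 ≤ (traceNorm ρ + 1) / 2 := by
      have h := (Complex.le_def.1 hBρ.trace_nonneg).1
      rw [trace_sub, htrB, htr, Complex.sub_re, Complex.ofReal_re, Complex.one_re,
        Complex.zero_re] at h
      linarith
    have hs : 1 + (traceNorm ρ - 1) / 2 = (traceNorm ρ + 1) / 2 := by ring
    have hpos : 0 < (traceNorm ρ + 1) / 2 := by linarith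
    refine ⟨by linarith, ((traceNorm ρ + 1) / 2)⁻¹ • B,
      ⟨hB.smul (inv_nonneg.2 hpos.le), ?_⟩, ?_⟩
    · rw [trace_smul, htrB, Complex.real_smul, ← Complex.ofReal_mul, inv_mul_cancel₀ hpos.ne',
        Complex.ofReal_one]
    · rwa [hs, smul_inv_smul₀ hpos.ne']
  · rintro s ⟨hs, δ, ⟨hδ, htrδ⟩, hle⟩
    have h := hρ.sum_max_eigenvalues_le_trace (hδ.smul (by linarith : 0 ≤ 1 + s)) hle
    rw [hsum, trace_smul, htrδ, Complex.real_smul, mul_one, Complex.ofReal_re] at h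
    linarith
end

section
/- Let n be a finite type, let Λ : Matrix n n ℂ →ₗ[ℂ] Matrix n n ℂ be Hermiticity-preserving (Λ(Xᴴ) = (Λ(X))ᴴ for all X), and let Γ : Matrix n n ℂ →ₗ[ℂ] Matrix n n ℂ be completely positive and trace-preserving. Then ‖ρ_{Γ∘Λ}‖₁ ≤ ‖ρ_Λ‖₁, where ρ_Θ denotes the normalized Choi matrix of Θ. Consequently, the robustness of non-Markovianity (‖ρ_Λ‖₁ - 1)/2 is monotone under left composition with Markovian (completely positive trace-preserving) maps: N_R(Γ∘Λ) ≤ N_R(Λ). -/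
open Matrix
open scoped ComplexOrder

/-- The blockwise application `id_m ⊗ Φ` of a linear map `Φ` on `Matrix n n ℂ`:
`((id_m ⊗ Φ)(Δ))((i,k),(j,l)) = (Φ(Δ_{i,j}))(k,l)` where `Δ_{i,j}(k,l) = Δ((i,k),(j,l))`
is the `(i,j)` block of `Δ`. -/
def idTensor (m : Type*) [Fintype m] {n : Type*} [Fintype n]
    (Φ : Matrix n n ℂ →ₗ[ℂ] Matrix n n ℂ) :
    Matrix (m × n) (m × n) ℂ →ₗ[ℂ] Matrix (m × n) (m × n) ℂ where
  toFun Δ := Matrix.of fun p q =>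
    (Φ (Matrix.of fun k l => Δ (p.1, k) (q.1, l))) p.2 q.2
  map_add' Δ Δ' := by
    have h : ∀ i j : m, (Matrix.of fun k l => (Δ + Δ') (i, k) (j, l))
        = (Matrix.of fun k l => Δ (i, k) (j, l))
          + (Matrix.of fun k l => Δ' (i, k) (j, l)) := by
      intro i j; ext k l; simp [Matrix.add_apply]
    ext ⟨i, k⟩ ⟨j, l⟩
    simp only [Matrix.of_apply, Matrix.add_apply]
    rw [← Matrix.add_apply, ← map_add, ← h]
    rfl
  map_smul' c Δ := by
    have h : ∀ i j : m, (Matrix.of fun k l => (c • Δ) (i, k) (j, l))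
        = c • (Matrix.of fun k l => Δ (i, k) (j, l)) := by
      intro i j; ext k l; simp [Matrix.smul_apply]
    ext ⟨i, k⟩ ⟨j, l⟩
    simp only [Matrix.of_apply, Matrix.smul_apply, RingHom.id_apply]
    rw [← Matrix.smul_apply, ← LinearMap.map_smul, ← h]
    rfl

/-- Complete positivity: `id_m ⊗ Φ` maps positive semidefinite matrices to positive
semidefinite matrices for every finite type `m`. -/
def IsCompletelyPositive {n : Type*} [Fintype n]
    (Φ : Matrix n n ℂ →ₗ[ℂ] Matrix n n ℂ) : Prop :=
  ∀ (m : Type) (_ : Fintype m) (Δ : Matrix (m × n) (m × n) ℂ),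
    Δ.PosSemidef → (idTensor m Φ Δ).PosSemidef

/-- Trace preservation. -/
def IsTracePreserving {n : Type*} [Fintype n]
    (Φ : Matrix n n ℂ →ₗ[ℂ] Matrix n n ℂ) : Prop :=
  ∀ X : Matrix n n ℂ, (Φ X).trace = X.trace

open Kronecker in
/-- The normalized Choi matrix `(1/card n) Σ_{i,j} E_{ij} ⊗ Θ(E_{ij})` of a linear map `Θ`. -/
noncomputable def choiMatrix {n : Type*} [Fintype n] [DecidableEq n]
    (Θ : Matrix n n ℂ →ₗ[ℂ] Matrix n n ℂ) : Matrix (n × n) (n × n) ℂ :=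
  ((Fintype.card n : ℂ)⁻¹) •
    ∑ i : n, ∑ j : n,
      (Matrix.single i j (1 : ℂ)) ⊗ₖ (Θ (Matrix.single i j (1 : ℂ)))

open scoped MatrixOrder in
/-- The trace of a product of two positive semidefinite matrices is nonnegative. -/
lemma trace_mul_nonneg {n : Type*} [Fintype n] {A B : Matrix n n ℂ}
    (hA : A.PosSemidef) (hB : B.PosSemidef) : 0 ≤ (A * B).trace := by
  classical
  obtain ⟨C, rfl⟩ := CStarAlgebra.nonneg_iff_eq_star_mul_self.mp hB.nonneg
  rw [star_eq_conjTranspose, ← Matrix.mul_assoc, Matrix.trace_mul_comm, ← Matrix.mul_assoc]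
  exact (hA.mul_mul_conjTranspose_same C).trace_nonneg

open scoped MatrixOrder in
/-- A Hermitian matrix is the difference of two positive semidefinite matrices whose traces add
up to its trace norm. -/
lemma exists_posSemidef_sub_traceNorm_eq {n : Type*} [Fintype n] [DecidableEq n]
    {A : Matrix n n ℂ} (hA : A.IsHermitian) :
    ∃ P Q : Matrix n n ℂ, P.PosSemidef ∧ Q.PosSemidef ∧ A = P - Q ∧
      traceNorm A = (P + Q).trace.re := by
  have hA' : IsSelfAdjoint A := hA
  refine ⟨A⁺, A⁻, (CFC.posPart_nonneg A).posSemidef, (CFC.negPart_nonneg A).posSemidef,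
    (CFC.posPart_sub_negPart A hA').symm, ?_⟩
  rw [CFC.posPart_add_negPart A hA']
  rfl

open scoped MatrixOrder in
/-- The trace norm of a Hermitian matrix is attained as a trace pairing with a contraction. -/
lemma exists_traceNorm_eq_trace_mul {n : Type*} [Fintype n] [DecidableEq n]
    {A : Matrix n n ℂ} (hA : A.IsHermitian) :
    ∃ S : Matrix n n ℂ, (1 - S).PosSemidef ∧ (1 + S).PosSemidef ∧
      traceNorm A = (S * A).trace.re := by
  have hA' : IsSelfAdjoint A := hA
  let f : ℝ → ℝ := fun x => if x < 0 then -1 else 1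
  have hf : ContinuousOn f (spectrum ℝ A) := A.finite_real_spectrum.continuousOn f
  refine ⟨cfc f A, ?_, ?_, ?_⟩
  · rw [← Matrix.le_iff]
    refine cfc_le_one f A fun x _ => ?_
    simp only [f]; split_ifs <;> norm_num
  · have h : algebraMap ℝ (Matrix n n ℂ) (-1) ≤ cfc f A :=
      algebraMap_le_cfc f (-1) A (fun x _ => by simp only [f]; split_ifs <;> norm_num) hf hA'
    rw [Matrix.le_iff] at h
    simpa [add_comm] using h
  · have h : CFC.abs A = cfc f A * A := by
      rw [CFC.abs_eq_cfc_norm A hA']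
      conv_rhs => enter [2]; rw [← cfc_id' ℝ A hA']
      rw [← cfc_mul f (fun x => x) A hf continuousOn_id]
      refine cfc_congr fun x _ => ?_
      simp only [f, Real.norm_eq_abs]
      split_ifs with hx
      · simp [abs_of_neg hx]
      · simp [abs_of_nonneg (not_lt.mp hx)]
    rw [← h]
    rfl

/-- The trace norm of a difference of positive semidefinite matrices is at most the sum of
their traces. -/
lemma traceNorm_sub_le_s10 {n : Type*} [Fintype n] [DecidableEq n] {P Q : Matrix n n ℂ}
    (hP : P.PosSemidef) (hQ : Q.PosSemidef) : traceNorm (P - Q) ≤ (P + Q).trace.re := by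
  obtain ⟨S, hS, hS', h⟩ := exists_traceNorm_eq_trace_mul (hP.1.sub hQ.1)
  have hSP := (Complex.nonneg_iff.mp (trace_mul_nonneg hS hP)).1
  have hSQ := (Complex.nonneg_iff.mp (trace_mul_nonneg hS' hQ)).1
  rw [h]
  simp only [Matrix.sub_mul, Matrix.add_mul, Matrix.mul_sub, Matrix.one_mul, Matrix.trace_sub,
    Matrix.trace_add, Complex.sub_re, Complex.add_re] at hSP hSQ ⊢
  linarith

/-- Complete positivity applies to ancillas in any universe. -/
lemma IsCompletelyPositive.idTensor_posSemidef {m n : Type*} [Fintype m] [Fintype n]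
    {Φ : Matrix n n ℂ →ₗ[ℂ] Matrix n n ℂ} (hΦ : IsCompletelyPositive Φ)
    {Δ : Matrix (m × n) (m × n) ℂ} (hΔ : Δ.PosSemidef) : (idTensor m Φ Δ).PosSemidef := by
  let e := Fintype.equivFin m
  have h := (hΦ (Fin (Fintype.card m)) inferInstance _
    (hΔ.submatrix (Prod.map e.symm id))).submatrix (Prod.map e id)
  convert h using 1
  ext p q
  simp [idTensor]

/-- `id ⊗ Φ` preserves the trace when `Φ` does. -/
lemma IsTracePreserving.trace_idTensor {m n : Type*} [Fintype m] [Fintype n]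
    {Φ : Matrix n n ℂ →ₗ[ℂ] Matrix n n ℂ} (hΦ : IsTracePreserving Φ)
    (Δ : Matrix (m × n) (m × n) ℂ) : (idTensor m Φ Δ).trace = Δ.trace := by
  simp only [Matrix.trace, Matrix.diag_apply, Fintype.sum_prod_type]
  exact Finset.sum_congr rfl fun i _ => hΦ (Matrix.of fun k l => Δ (i, k) (i, l))

lemma choiMatrix_apply {n : Type*} [Fintype n] [DecidableEq n]
    (Θ : Matrix n n ℂ →ₗ[ℂ] Matrix n n ℂ) (p q : n × n) :
    choiMatrix Θ p q = (Fintype.card n : ℂ)⁻¹ * Θ (Matrix.single p.1 q.1 1) p.2 q.2 := by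
  simp [choiMatrix, Matrix.sum_apply, Matrix.single_apply, ite_and]

lemma isHermitian_choiMatrix {n : Type*} [Fintype n] [DecidableEq n]
    {Λ : Matrix n n ℂ →ₗ[ℂ] Matrix n n ℂ} (hΛ : ∀ X : Matrix n n ℂ, Λ Xᴴ = (Λ X)ᴴ) :
    (choiMatrix Λ).IsHermitian := by
  ext p q
  have h := congrFun (congrFun (hΛ (Matrix.single q.1 p.1 1)) p.2) q.2
  rw [Matrix.conjTranspose_single, star_one] at h
  simp [choiMatrix_apply, h]

lemma choiMatrix_comp {n : Type*} [Fintype n] [DecidableEq n]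
    (Γ Λ : Matrix n n ℂ →ₗ[ℂ] Matrix n n ℂ) :
    choiMatrix (Γ ∘ₗ Λ) = idTensor n Γ (choiMatrix Λ) := by
  ext p q
  have h : (Matrix.of fun k l => choiMatrix Λ (p.1, k) (q.1, l)) =
      (Fintype.card n : ℂ)⁻¹ • Λ (Matrix.single p.1 q.1 1) := by
    ext k l
    simp [choiMatrix_apply]
  rw [choiMatrix_apply]
  simp [idTensor, h]

/-- `id ⊗ Φ` does not increase the trace norm of Hermitian matrices when `Φ` is completely
positive and trace preserving. -/
lemma traceNorm_idTensor_le {m n : Type*} [Fintype m] [DecidableEq m] [Fintype n]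
    [DecidableEq n] {Φ : Matrix n n ℂ →ₗ[ℂ] Matrix n n ℂ} (hCP : IsCompletelyPositive Φ)
    (hTP : IsTracePreserving Φ) {A : Matrix (m × n) (m × n) ℂ} (hA : A.IsHermitian) :
    traceNorm (idTensor m Φ A) ≤ traceNorm A := by
  obtain ⟨P, Q, hP, hQ, rfl, h⟩ := exists_posSemidef_sub_traceNorm_eq hA
  rw [h, map_sub, ← hTP.trace_idTensor, map_add]
  exact traceNorm_sub_le_s10 (hCP.idTensor_posSemidef hP) (hCP.idTensor_posSemidef hQ)

/-- Monotonicity of the robustness of non-Markovianity under left composition with a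
Markovian (completely positive trace-preserving) map: the trace norm of the Choi matrix does
not increase, and hence neither does `N_R = (‖ρ_Λ‖₁ - 1)/2`. -/
theorem robustness_monotone_comp {n : Type*} [Fintype n] [DecidableEq n]
    (Λ Γ : Matrix n n ℂ →ₗ[ℂ] Matrix n n ℂ)
    (hΛ : ∀ X : Matrix n n ℂ, Λ Xᴴ = (Λ X)ᴴ)
    (hΓCP : IsCompletelyPositive Γ) (hΓTP : IsTracePreserving Γ) :
    traceNorm (choiMatrix (Γ ∘ₗ Λ)) ≤ traceNorm (choiMatrix Λ) ∧
      (traceNorm (choiMatrix (Γ ∘ₗ Λ)) - 1) / 2 ≤ (traceNorm (choiMatrix Λ) - 1) / 2 := by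
  have h : traceNorm (choiMatrix (Γ ∘ₗ Λ)) ≤ traceNorm (choiMatrix Λ) := by
    rw [choiMatrix_comp]
    exact traceNorm_idTensor_le hΓCP hΓTP (isHermitian_choiMatrix hΛ)
  exact ⟨h, by linarith⟩
end
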